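/- (McMahon's identity) For every real q with 0 ≤ q < 1, the sum of q^{|π|} over all plane partitions π equals ∏_{n≥1} (1 − q^n)^{−n}; in particular, for 0 < q < 1 the assignment π ↦ q^{|π|} ∏_{n≥1} (1 − q^n)^{n} defines a probability measure on the set of plane partitions. -/

import Mathlib

open Filter Topology
open scoped Classical

/-- A plane partition: an array `(π_{ij})_{i,j ≥ 1}` of nonnegative integers,
nonincreasing in `i` and in `j`, with finitely many nonzero entries.
`part i j` is the entry `π_{i+1, j+1}`. -/
structure PlanePartition : Type where
  part : ℕ → ℕ → ℕ
  antitone_fst : ∀ ⦃i i' : ℕ⦄ (j : ℕ), i ≤ i' → part i' j ≤ part i j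
  antitone_snd : ∀ (i : ℕ) ⦃j j' : ℕ⦄, j ≤ j' → part i j' ≤ part i j
  finite_support : (Function.support fun p : ℕ × ℕ => part p.1 p.2).Finite

/-- The volume `|π| = Σ_{i,j} π_{ij}` of a plane partition. -/
noncomputable def PlanePartition.size (π : PlanePartition) : ℕ :=
  ∑' p : ℕ × ℕ, π.part p.1 p.2


namespace MacMahon

/-- Plane partitions with cells in `D`. -/
def IsPP (D : Finset (ℕ × ℕ)) (f : ℕ → ℕ → ℕ) : Prop :=
  (∀ i j, (i, j) ∉ D → f i j = 0) ∧
    ∀ i j, (i, j) ∈ D → f (i + 1) j ≤ f i j ∧ f i (j + 1) ≤ f i j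

/-- Upper subsets of the `N × N` box. -/
def Good (N : ℕ) (D : Finset (ℕ × ℕ)) : Prop :=
  ∀ i j, (i, j) ∈ D → i < N ∧ j < N ∧
    ∀ i' j', i ≤ i' → j ≤ j' → i' < N → j' < N → (i', j') ∈ D

/-- The diagonal toggle. -/
def tog (a b : ℕ) (f : ℕ → ℕ → ℕ) (v : ℕ) (i j : ℕ) : ℕ :=
  if i = a ∧ j = b then v
  else if a < i ∧ i + b = j + a then
    min (f (i - 1) j) (f i (j - 1)) + max (f (i + 1) j) (f i (j + 1)) - f i j
  else f i j

lemma tog_base (a b : ℕ) (f : ℕ → ℕ → ℕ) (v : ℕ) : tog a b f v a b = v := by simp [tog]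

lemma tog_diag (a b : ℕ) (f : ℕ → ℕ → ℕ) (v k : ℕ) :
    tog a b f v (a + k + 1) (b + k + 1) =
      min (f (a + k) (b + k + 1)) (f (a + k + 1) (b + k)) +
        max (f (a + k + 1 + 1) (b + k + 1)) (f (a + k + 1) (b + k + 1 + 1)) - f (a + k + 1) (b + k + 1) := by
  unfold tog
  rw [if_neg (by omega), if_pos (by omega)]
  rfl

lemma tog_off (a b : ℕ) (f : ℕ → ℕ → ℕ) (v i j : ℕ) (h : ¬ (a ≤ i ∧ i + b = j + a)) :
    tog a b f v i j = f i j := by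
  unfold tog
  rw [if_neg (by omega), if_neg (by omega)]

/-- monotonicity on the quadrant at `(a,b)`, except at `(a,b)` itself. -/
def Quad (a b : ℕ) (f : ℕ → ℕ → ℕ) : Prop :=
  ∀ i j, a ≤ i → b ≤ j → ¬ (i = a ∧ j = b) → f (i + 1) j ≤ f i j ∧ f i (j + 1) ≤ f i j

lemma tog_tog (a b : ℕ) (f : ℕ → ℕ → ℕ) (hf : Quad a b f) (v w : ℕ) (i j : ℕ)
    (h : i = a ∧ j = b → w = f a b) : tog a b (tog a b f v) w i j = f i j := by
  by_cases h0 : a ≤ i ∧ i + b = j + a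
  · obtain ⟨k, rfl⟩ := Nat.exists_eq_add_of_le h0.1
    obtain rfl : j = b + k := by omega
    cases k with
    | zero => simp only [add_zero, tog_base]; exact h ⟨rfl, rfl⟩
    | succ k =>
      rw [← add_assoc, ← add_assoc, tog_diag, tog_diag, tog_off _ _ _ _ _ _ (by omega),
        tog_off _ _ _ _ _ _ (by omega), tog_off _ _ _ _ _ _ (by omega),
        tog_off _ _ _ _ _ _ (by omega)]
      have h1 := (hf (a + k) (b + k + 1) (by omega) (by omega) (by omega)).1
      have h2 := (hf (a + k + 1) (b + k) (by omega) (by omega) (by omega)).2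
      omega
  · rw [tog_off _ _ _ _ _ _ h0, tog_off _ _ _ _ _ _ h0]

/-- pointwise monotonicity is preserved away from the corner. -/
lemma tog_mono (a b : ℕ) (f : ℕ → ℕ → ℕ) (hf : Quad a b f) (v : ℕ) (i j : ℕ)
    (hij : ¬ (i = a ∧ j = b)) (h1 : ¬ (i + 1 = a ∧ j = b)) (h2 : ¬ (i = a ∧ j + 1 = b))
    (hm : f (i + 1) j ≤ f i j ∧ f i (j + 1) ≤ f i j) :
    tog a b f v (i + 1) j ≤ tog a b f v i j ∧ tog a b f v i (j + 1) ≤ tog a b f v i j := by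
  by_cases h0 : a ≤ i ∧ i + b = j + a
  · obtain ⟨k, rfl⟩ := Nat.exists_eq_add_of_le h0.1
    obtain rfl : j = b + k := by omega
    cases k with
    | zero => simp at hij
    | succ k =>
      simp only [← add_assoc] at hm ⊢
      rw [tog_diag, tog_off _ _ _ _ _ _ (by omega),
        tog_off _ _ _ _ _ _ (by omega)]
      have h1 := (hf (a + k) (b + k + 1) (by omega) (by omega) (by omega)).1
      have h2 := (hf (a + k + 1) (b + k) (by omega) (by omega) (by omega)).2
      omega
  · rw [tog_off _ _ _ _ i j h0]
    constructor
    · by_cases h3 : a ≤ i + 1 ∧ i + 1 + b = j + a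
      · obtain ⟨k, rfl⟩ : ∃ k, i = a + k := ⟨i - a, by omega⟩
        obtain rfl : j = b + k + 1 := by omega
        rw [tog_diag]
        have h1 := (hf (a + k + 1) (b + k + 1) (by omega) (by omega) (by omega))
        omega
      · rw [tog_off _ _ _ _ _ _ h3]; exact hm.1
    · by_cases h3 : a ≤ i ∧ i + b = j + 1 + a
      · obtain ⟨k, rfl⟩ : ∃ k, j = b + k := ⟨j - b, by omega⟩
        obtain rfl : i = a + k + 1 := by omega
        rw [tog_diag]
        have h1 := (hf (a + k + 1) (b + k + 1) (by omega) (by omega) (by omega))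
        omega
      · rw [tog_off _ _ _ _ _ _ h3]; exact hm.2

/-- toggling preserves vanishing outside of the box. -/
lemma tog_zero (a b N : ℕ) (D : Finset (ℕ × ℕ)) (f : ℕ → ℕ → ℕ) (v : ℕ) (i j : ℕ)
    (hD : ∀ i j, a ≤ i → b ≤ j → ¬ (i = a ∧ j = b) → i < N → j < N → (i, j) ∈ D)
    (hbox : ∀ i j, N ≤ i ∨ N ≤ j → f i j = 0)
    (h : (i, j) ∉ D) (hne : ¬ (i = a ∧ j = b)) (hf : f i j = 0) : tog a b f v i j = 0 := by
  by_cases h0 : a ≤ i ∧ i + b = j + a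
  · obtain ⟨k, rfl⟩ := Nat.exists_eq_add_of_le h0.1
    obtain rfl : j = b + k := by omega
    cases k with
    | zero => simp at hne
    | succ k =>
      rw [← add_assoc, ← add_assoc, tog_diag]
      have : N ≤ a + k + 1 ∨ N ≤ b + k + 1 := by
        by_contra hc
        exact h (hD _ _ (by omega) (by omega) (by omega) (by omega) (by omega))
      rw [hbox (a + k + 1 + 1) (b + k + 1) (by omega), hbox (a + k + 1) (b + k + 1 + 1) (by omega)]
      rcases this with h | h
      · rw [hbox (a + k + 1) (b + k) (by omega)]; simp
      · rw [hbox (a + k) (b + k + 1) (by omega)]; simp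
  · rw [tog_off _ _ _ _ _ _ h0, hf]

/-- Sum along a diagonal. -/
def dsum (N : ℕ) (f : ℕ → ℕ → ℕ) (i j : ℕ) : ℕ := ∑ k ∈ Finset.range N, f (i + k) (j + k)

lemma dsum_tog (a b N : ℕ) (f : ℕ → ℕ → ℕ) (hf : Quad a b f) (v : ℕ)
    (hbox : ∀ i j, N ≤ i ∨ N ≤ j → f i j = 0)
    (hc : max (f (a + 1) b) (f a (b + 1)) ≤ f a b) :
    dsum N f a b + dsum N (tog a b f v) (a + 1) (b + 1) =
      (f a b - max (f (a + 1) b) (f a (b + 1))) + dsum N f (a + 1) b + dsum N f a (b + 1) := by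
  have key : ∀ M, ∑ k ∈ Finset.range (M + 1), f (a + k) (b + k)
      + ∑ k ∈ Finset.range M, tog a b f v (a + 1 + k) (b + 1 + k)
      + max (f (a + 1) b) (f a (b + 1))
      = f a b + ∑ k ∈ Finset.range M, f (a + 1 + k) (b + k)
        + ∑ k ∈ Finset.range M, f (a + k) (b + 1 + k)
        + max (f (a + M + 1) (b + M)) (f (a + M) (b + M + 1)) := by
    intro M
    induction M with
    | zero => simp
    | succ M ih =>
      rw [Finset.sum_range_succ _ (M + 1), Finset.sum_range_succ _ M,
        Finset.sum_range_succ _ M, Finset.sum_range_succ _ M, Finset.sum_range_succ _ M]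
      have e1 : a + 1 + M = a + M + 1 := by omega
      have e2 : b + 1 + M = b + M + 1 := by omega
      rw [Finset.sum_range_succ _ M] at ih
      simp only [← add_assoc, e1, e2, tog_diag] at ih ⊢
      have h1 := (hf (a + M) (b + M + 1) (by omega) (by omega) (by omega)).1
      have h2 := (hf (a + M + 1) (b + M) (by omega) (by omega) (by omega)).2
      omega
  have := key N
  rw [Finset.sum_range_succ, hbox (a + N) (b + N) (by omega),
    hbox (a + N + 1) (b + N) (by omega), hbox (a + N) (b + N + 1) (by omega)] at this
  unfold dsum
  simp only [max_self] at this
  omega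

/-- the bijection which removes a corner. -/
def step (N a b : ℕ) (D D' : Finset (ℕ × ℕ)) (hD' : Good N D') (hab : (a, b) ∈ D')
    (hmem : ∀ i j, (i, j) ∈ D ↔ (i, j) ∈ D' ∧ ¬ (i = a ∧ j = b))
    (hmin1 : ∀ i j, (i, j) ∈ D' → i ≤ a → j ≤ b → i = a ∧ j = b) :
    {f // IsPP D' f} ≃ ℕ × {f // IsPP D f} := by
  have hD : ∀ i j, a ≤ i → b ≤ j → ¬ (i = a ∧ j = b) → i < N → j < N → (i, j) ∈ D :=
    fun i j h1 h2 h3 h4 h5 => (hmem i j).2 ⟨(hD' a b hab).2.2 i j h1 h2 h4 h5, h3⟩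
  have box' : ∀ f, IsPP D' f → ∀ i j, N ≤ i ∨ N ≤ j → f i j = 0 := fun f hf i j h =>
    hf.1 i j fun hc => by have := hD' i j hc; omega
  have box : ∀ f, IsPP D f → ∀ i j, N ≤ i ∨ N ≤ j → f i j = 0 := fun f hf i j h =>
    hf.1 i j fun hc => by have := hD' i j ((hmem i j).1 hc).1; omega
  have quad' : ∀ f, IsPP D' f → Quad a b f := fun f hf i j h1 h2 h3 => by
    by_cases h : i < N ∧ j < N
    · exact hf.2 i j ((hmem i j).1 (hD i j h1 h2 h3 h.1 h.2)).1
    · rw [box' f hf (i + 1) j (by omega), box' f hf i (j + 1) (by omega)]; simp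
  have quad : ∀ f, IsPP D f → Quad a b f := fun f hf i j h1 h2 h3 => by
    by_cases h : i < N ∧ j < N
    · exact hf.2 i j (hD i j h1 h2 h3 h.1 h.2)
    · rw [box f hf (i + 1) j (by omega), box f hf i (j + 1) (by omega)]; simp
  refine
    { toFun := fun f => (f.1 a b - max (f.1 (a + 1) b) (f.1 a (b + 1)), ⟨tog a b f.1 0, ?_, ?_⟩)
      invFun := fun p => ⟨tog a b p.2.1 (p.1 + max (p.2.1 (a + 1) b) (p.2.1 a (b + 1))), ?_, ?_⟩
      left_inv := ?_
      right_inv := ?_ }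
  · intro i j h
    by_cases h0 : i = a ∧ j = b
    · rw [h0.1, h0.2, tog_base]
    · exact tog_zero a b N D f.1 0 i j hD (box' _ f.2) h h0
        (f.2.1 i j fun hc => h ((hmem i j).2 ⟨hc, h0⟩))
  · intro i j h
    have h' := (hmem i j).1 h
    refine tog_mono a b f.1 (quad' _ f.2) 0 i j h'.2 ?_ ?_ (f.2.2 i j h'.1)
    · intro hc; have := hmin1 i j h'.1; omega
    · intro hc; have := hmin1 i j h'.1; omega
  · intro i j h
    have h0 : ¬ (i = a ∧ j = b) := by rintro ⟨rfl, rfl⟩; exact h hab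
    have h' : (i, j) ∉ D := fun hc => h ((hmem i j).1 hc).1
    exact tog_zero a b N D _ _ i j hD (box _ p.2.2) h' h0 (p.2.2.1 i j h')
  · intro i j h
    by_cases h0 : i = a ∧ j = b
    · rw [h0.1, h0.2, tog_base, tog_off _ _ _ _ _ _ (by omega), tog_off _ _ _ _ _ _ (by omega)]
      omega
    · refine tog_mono a b _ (quad _ p.2.2) _ i j h0 ?_ ?_ (p.2.2.2 i j ((hmem i j).2 ⟨h, h0⟩))
      · intro hc; have := hmin1 i j h; omega
      · intro hc; have := hmin1 i j h; omega
  · intro f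
    apply Subtype.ext
    funext i j
    refine tog_tog a b f.1 (quad' _ f.2) _ _ i j fun _ => ?_
    dsimp only
    rw [tog_off _ _ _ _ _ _ (by omega), tog_off _ _ _ _ _ _ (by omega)]
    have := f.2.2 a b hab
    omega
  · rintro ⟨k, g⟩
    refine Prod.ext ?_ (Subtype.ext ?_)
    · dsimp only
      rw [tog_base, tog_off _ _ _ _ _ _ (by omega), tog_off _ _ _ _ _ _ (by omega)]
      omega
    · funext i j
      refine tog_tog a b g.1 (quad _ g.2) _ _ i j fun _ => ?_
      rw [g.2.1 a b (fun hc => ((hmem a b).1 hc).2 ⟨rfl, rfl⟩)]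

/-- arrays supported in `D`. -/
abbrev Arr {ι : Type} (D : Finset ι) : Type := {n : ι → ℕ // ∀ x, x ∉ D → n x = 0}

/-- Splitting off one coordinate. -/
noncomputable def arrEquiv {ι : Type} [DecidableEq ι] (D D' : Finset ι) (c : ι)
    (hmem : ∀ x, x ∈ D ↔ x ∈ D' ∧ x ≠ c) (hc : c ∈ D') : ℕ × Arr D ≃ Arr D' where
  toFun p := ⟨Function.update p.2.1 c p.1, fun x hx => by
    have h1 : x ≠ c := by rintro rfl; exact hx hc
    rw [Function.update_of_ne h1]
    exact p.2.2 x fun h => hx ((hmem x).1 h).1⟩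
  invFun n := (n.1 c, ⟨Function.update n.1 c 0, fun x hx => by
    by_cases h1 : x = c
    · subst h1; simp
    · rw [Function.update_of_ne h1]
      exact n.2 x fun h => hx ((hmem x).2 ⟨h, h1⟩)⟩)
  left_inv p := by
    refine Prod.ext (by simp) (Subtype.ext ?_)
    have : p.2.1 c = 0 := p.2.2 c fun h => ((hmem c).1 h).2 rfl
    simp [← this]
  right_inv n := by
    apply Subtype.ext
    simp

/-- Generating function of arrays. -/
lemma arr_hasSum {ι : Type} [DecidableEq ι] (r : ι → ℝ) (h0 : ∀ x, 0 ≤ r x) (h1 : ∀ x, r x < 1) (D : Finset ι) :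
    HasSum (fun n : Arr D => ∏ x ∈ D, r x ^ n.1 x) (∏ x ∈ D, (1 - r x)⁻¹) := by
  induction D using Finset.induction_on with
  | empty =>
    have : Unique (Arr (∅ : Finset ι)) :=
      ⟨⟨⟨fun _ => 0, by simp⟩⟩, fun n => Subtype.ext (funext fun x => n.2 x (by simp))⟩
    exact hasSum_unique (fun n : Arr (∅ : Finset ι) => ∏ x ∈ (∅ : Finset ι), r x ^ n.1 x)
  | insert c D hcD ih =>
    have hm : ∀ x, x ∈ D ↔ x ∈ insert c D ∧ x ≠ c := by
      intro x
      simp only [Finset.mem_insert]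
      constructor
      · intro h; exact ⟨Or.inr h, by rintro rfl; exact hcD h⟩
      · rintro ⟨h | h, h'⟩
        · exact absurd h h'
        · exact h
    rw [Finset.prod_insert hcD, ← (arrEquiv D (insert c D) c hm (by simp)).hasSum_iff]
    have hg := hasSum_geometric_of_lt_one (h0 c) (h1 c)
    have hs := hg.summable.mul_of_nonneg ih.summable (fun k => pow_nonneg (h0 c) k) (fun n =>
      Finset.prod_nonneg fun x _ => pow_nonneg (h0 x) _)
    have hmul := hg.mul ih hs
    suffices heq : (fun n : Arr (insert c D) => ∏ x ∈ insert c D, r x ^ n.1 x) ∘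
        (arrEquiv D (insert c D) c hm (by simp)) =
        fun p : ℕ × Arr D => r c ^ p.1 * ∏ x ∈ D, r x ^ p.2.1 x by
      rw [heq]; exact hmul
    funext p
    simp only [Function.comp_apply, arrEquiv, Equiv.coe_fn_mk]
    rw [Finset.prod_insert hcD, Function.update_self]
    congr 1
    refine Finset.prod_congr rfl fun x hx => ?_
    rw [Function.update_of_ne ((hm x).1 hx).2]

/-- Rectangle sums. -/
def rsum (N : ℕ) (n : ℕ × ℕ → ℕ) (i j : ℕ) : ℕ :=
  ∑ i' ∈ Finset.Ico i N, ∑ j' ∈ Finset.Ico j N, n (i', j')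

lemma rsum_rec (N : ℕ) (n : ℕ × ℕ → ℕ) (i j : ℕ) (hi : i < N) (hj : j < N) :
    rsum N n i j + rsum N n (i + 1) (j + 1) =
      n (i, j) + rsum N n (i + 1) j + rsum N n i (j + 1) := by
  unfold rsum
  rw [Finset.sum_eq_sum_Ico_succ_bot hi, Finset.sum_eq_sum_Ico_succ_bot hi,
    Finset.sum_eq_sum_Ico_succ_bot hj]
  omega

lemma rsum_congr (N : ℕ) (n m : ℕ × ℕ → ℕ) (i j : ℕ)
    (h : ∀ i' j', i ≤ i' → j ≤ j' → n (i', j') = m (i', j')) : rsum N n i j = rsum N m i j := by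
  unfold rsum
  refine Finset.sum_congr rfl fun i' hi => Finset.sum_congr rfl fun j' hj => ?_
  exact h _ _ (Finset.mem_Ico.1 hi).1 (Finset.mem_Ico.1 hj).1

lemma rsum_zero (N : ℕ) (n : ℕ × ℕ → ℕ) (i j : ℕ) (h : N ≤ i ∨ N ≤ j) : rsum N n i j = 0 := by
  unfold rsum
  rcases h with h | h
  · rw [Finset.Ico_eq_empty_of_le h]; simp
  · simp [Finset.Ico_eq_empty_of_le h]

theorem main_bij (N : ℕ) : ∀ (s : ℕ) (D : Finset (ℕ × ℕ)), D.card = s → Good N D →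
    ∃ e : {f // IsPP D f} ≃ Arr D, ∀ (f : {f // IsPP D f}) (i j : ℕ), (i, j) ∈ D →
      (∀ i' j', i = i' + 1 → j = j' + 1 → (i', j') ∉ D) →
      dsum N f.1 i j = rsum N (e f).1 i j := by
  intro s
  induction s with
  | zero =>
    intro D hD _
    obtain rfl := Finset.card_eq_zero.1 hD
    refine ⟨⟨fun _ => ⟨fun _ => 0, by simp⟩, fun _ => ⟨fun _ _ => 0, by simp [IsPP]⟩, ?_, ?_⟩, ?_⟩
    · intro f
      exact Subtype.ext (funext fun i => funext fun j => (f.2.1 i j (by simp)).symm)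
    · intro f
      exact Subtype.ext (funext fun x => (f.2 x (by simp)).symm)
    · intro f i j h; simp at h
  | succ s ih =>
    intro D' hcard hD'
    have hne : D'.Nonempty := Finset.card_pos.1 (by omega)
    obtain ⟨⟨a, b⟩, hab, hmin⟩ := D'.exists_min_image (fun x => x.1 + x.2) hne
    have hmin1 : ∀ i j, (i, j) ∈ D' → i ≤ a → j ≤ b → i = a ∧ j = b := by
      intro i j h h1 h2
      have := hmin (i, j) h
      simp only at this
      omega
    have hmem2 : ∀ x, x ∈ D'.erase (a, b) ↔ x ∈ D' ∧ x ≠ (a, b) := by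
      intro x; rw [Finset.mem_erase]; tauto
    have hmem : ∀ i j, (i, j) ∈ D'.erase (a, b) ↔ (i, j) ∈ D' ∧ ¬ (i = a ∧ j = b) := by
      intro i j; rw [hmem2]; simp
    have hgood : Good N (D'.erase (a, b)) := by
      intro i j h
      have h' := (hmem i j).1 h
      obtain ⟨h1, h2, h3⟩ := hD' i j h'.1
      refine ⟨h1, h2, fun i' j' hi hj hi' hj' => (hmem _ _).2 ⟨h3 i' j' hi hj hi' hj', ?_⟩⟩
      intro hc
      exact h'.2 (hmin1 i j h'.1 (by omega) (by omega))
    obtain ⟨e, he⟩ := ih (D'.erase (a, b)) (by rw [Finset.card_erase_of_mem hab]; omega) hgood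
    obtain ⟨haN, hbN, hup⟩ := hD' a b hab
    refine ⟨((step N a b _ D' hD' hab hmem hmin1).trans
      ((Equiv.refl ℕ).prodCongr e)).trans (arrEquiv _ D' (a, b) hmem2 hab), ?_⟩
    intro f i j hij hfirst
    have hbox : ∀ i j, N ≤ i ∨ N ≤ j → f.1 i j = 0 := fun i j h =>
      f.2.1 i j fun hc => by have := hD' i j hc; omega
    have hquad : Quad a b f.1 := fun i j h1 h2 h3 => by
      by_cases h : i < N ∧ j < N
      · exact f.2.2 i j (hup i j h1 h2 h.1 h.2)
      · rw [hbox (i + 1) j (by omega), hbox i (j + 1) (by omega)]; simp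
    set g := (step N a b _ D' hD' hab hmem hmin1 f).2 with hg
    have hg1 : g.1 = tog a b f.1 0 := rfl
    set m := (e g).1 with hm
    have hE : ((((step N a b _ D' hD' hab hmem hmin1).trans
      ((Equiv.refl ℕ).prodCongr e)).trans (arrEquiv _ D' (a, b) hmem2 hab)) f).1 =
        Function.update m (a, b) (f.1 a b - max (f.1 (a + 1) b) (f.1 a (b + 1))) := rfl
    rw [hE]
    have hgbox : ∀ i j, N ≤ i ∨ N ≤ j → g.1 i j = 0 := fun i j h =>
      g.2.1 i j fun hc => by have := hD' i j ((hmem i j).1 hc).1; omega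
    -- the diagonal sums of `g`, extended by the trivial case
    have hgsum : ∀ i j, a ≤ i → b ≤ j → ¬ (i = a ∧ j = b) →
        (∀ i' j', i = i' + 1 → j = j' + 1 → (i', j') ∉ D'.erase (a, b)) →
        dsum N g.1 i j = rsum N m i j := by
      intro i j h1 h2 h3 h4
      by_cases h : i < N ∧ j < N
      · exact he g i j ((hmem _ _).2 ⟨hup i j h1 h2 h.1 h.2, h3⟩) h4
      · rw [rsum_zero _ _ _ _ (by omega)]
        exact Finset.sum_eq_zero fun k _ => hgbox _ _ (by omega)
    -- sums off the diagonal do not change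
    have hoff : ∀ i j, i + b ≠ j + a → dsum N g.1 i j = dsum N f.1 i j := by
      intro i j h
      refine Finset.sum_congr rfl fun k _ => ?_
      rw [hg1, tog_off _ _ _ _ _ _ (by omega)]
    by_cases h0 : i = a ∧ j = b
    · obtain ⟨rfl, rfl⟩ := h0
      have hc := f.2.2 i j hij
      have H1 := dsum_tog i j N f.1 hquad 0 hbox (by omega)
      rw [← hg1] at H1
      have H2 := rsum_rec N (Function.update m (i, j)
        (f.1 i j - max (f.1 (i + 1) j) (f.1 i (j + 1)))) i j haN hbN
      rw [Function.update_self] at H2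
      have hu : ∀ p q, i ≤ p → j ≤ q → ¬ (p = i ∧ q = j) → rsum N (Function.update m (i, j)
          (f.1 i j - max (f.1 (i + 1) j) (f.1 i (j + 1)))) p q = rsum N m p q := by
        intro p q h1 h2 h3
        refine rsum_congr _ _ _ _ _ fun i' j' h4 h5 => ?_
        rw [Function.update_of_ne]
        intro hc
        rw [Prod.mk.injEq] at hc
        omega
      rw [hu (i + 1) (j + 1) (by omega) (by omega) (by omega),
        hu (i + 1) j (by omega) (by omega) (by omega),
        hu i (j + 1) (by omega) (by omega) (by omega)] at H2
      have hmn := fun i' j' h => hmin1 i' j' (((hmem i' j').1 h).1)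
      rw [← hoff (i + 1) j (by omega), ← hoff i (j + 1) (by omega),
        hgsum (i + 1) j (by omega) (by omega) (by omega)
          (fun i' j' h1 h2 h3 => by have := hmn i' j' h3; omega),
        hgsum i (j + 1) (by omega) (by omega) (by omega)
          (fun i' j' h1 h2 h3 => by have := hmn i' j' h3; omega),
        hgsum (i + 1) (j + 1) (by omega) (by omega) (by omega)
          (fun i' j' h1 h2 h3 => by have := ((hmem i' j').1 h3).2; omega)] at H1
      omega
    · have hd : i + b ≠ j + a := by
        intro hd
        by_cases hia : i ≤ a
        · exact h0 (hmin1 i j hij hia (by omega))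
        · have hb := hD' i j hij
          refine hfirst (i - 1) (j - 1) (by omega) (by omega)
            (hup _ _ (by omega) (by omega) (by omega) (by omega))
      rw [← hoff i j hd, he g i j ((hmem _ _).2 ⟨hij, h0⟩)
        (fun i' j' h1 h2 h3 => hfirst i' j' h1 h2 ((hmem _ _).1 h3).1)]
      refine rsum_congr _ _ _ _ _ fun i' j' h4 h5 => ?_
      rw [Function.update_of_ne]
      intro hc
      rw [Prod.mk.injEq] at hc
      exact h0 (hmin1 i j hij (by omega) (by omega))

lemma sum_shift (N k : ℕ) (g : ℕ → ℕ) (hg : ∀ j, N ≤ j → g j = 0) :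
    ∑ j ∈ Finset.range N, g (j + k) = ∑ j ∈ Finset.range N, if k ≤ j then g j else 0 := by
  rw [← Finset.sum_filter, Finset.range_eq_Ico, Finset.sum_Ico_add']
  symm
  apply Finset.sum_subset
  · intro x hx
    simp only [Finset.mem_filter, Finset.mem_Ico] at hx ⊢
    omega
  · intro x hx hx'
    simp only [Finset.mem_filter, Finset.mem_Ico] at hx hx'
    exact hg x (by omega)

lemma sum_ico (N c : ℕ) (g : ℕ → ℕ) :
    ∑ j ∈ Finset.range N, ∑ j' ∈ Finset.Ico (j + c) N, g j' =
      ∑ j' ∈ Finset.range N, (j' + 1 - c) * g j' := by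
  rw [Finset.sum_comm' (t' := Finset.range N) (s' := fun j' => Finset.range (j' + 1 - c))]
  · simp
  · intro x y
    simp only [Finset.mem_range, Finset.mem_Ico]
    omega

/-- The box. -/
abbrev box (N : ℕ) : Finset (ℕ × ℕ) := Finset.range N ×ˢ Finset.range N

lemma total_dsum (N : ℕ) (f : ℕ → ℕ → ℕ) (hbox : ∀ i j, N ≤ i ∨ N ≤ j → f i j = 0) :
    ∑ x ∈ box N, f x.1 x.2 =
      ∑ j ∈ Finset.range N, dsum N f 0 j + ∑ i ∈ Finset.range N, dsum N f (i + 1) 0 := by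
  unfold dsum
  rw [Finset.sum_comm, Finset.sum_comm (s := Finset.range N) (t := Finset.range N)
    (f := fun i k => f (i + 1 + k) (0 + k)), Finset.sum_product]
  have h1 : ∀ k, ∑ j ∈ Finset.range N, f (0 + k) (j + k) =
      ∑ j ∈ Finset.range N, if k ≤ j then f k j else 0 := by
    intro k
    rw [zero_add]
    exact sum_shift N k (fun j => f k j) fun j hj => hbox _ _ (Or.inr hj)
  have h2 : ∀ k, ∑ i ∈ Finset.range N, f (i + 1 + k) (0 + k) =
      ∑ i ∈ Finset.range N, if k + 1 ≤ i then f i k else 0 := by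
    intro k
    rw [← sum_shift N (k + 1) (fun i => f i k) fun j hj => hbox _ _ (Or.inl hj)]
    refine Finset.sum_congr rfl fun i _ => ?_
    congr 1 <;> omega
  simp only [h1, h2]
  rw [Finset.sum_comm (f := fun k i => if k + 1 ≤ i then f i k else 0), ← Finset.sum_add_distrib]
  refine Finset.sum_congr rfl fun i _ => ?_
  rw [← Finset.sum_add_distrib]
  refine Finset.sum_congr rfl fun j _ => ?_
  by_cases h : i ≤ j
  · rw [if_pos h, if_neg (by omega)]; rfl
  · rw [if_neg h, if_pos (by omega)]; simp

lemma total_rsum (N : ℕ) (n : ℕ × ℕ → ℕ) :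
    ∑ x ∈ box N, (x.1 + x.2 + 1) * n x =
      ∑ j ∈ Finset.range N, rsum N n 0 j + ∑ i ∈ Finset.range N, rsum N n (i + 1) 0 := by
  unfold rsum
  rw [sum_ico N 1 (fun i => ∑ j' ∈ Finset.Ico 0 N, n (i, j')), Finset.sum_comm,
    Finset.sum_product, ← Finset.range_eq_Ico, ← Finset.sum_add_distrib]
  refine Finset.sum_congr rfl fun i _ => ?_
  have := sum_ico N 0 (fun j => n (i, j))
  simp only [add_zero, Nat.sub_zero] at this
  rw [this, Finset.mul_sum, ← Finset.sum_add_distrib]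
  refine Finset.sum_congr rfl fun j _ => ?_
  simp only [Nat.add_sub_cancel]
  ring

lemma good_box (N : ℕ) : Good N (box N) := by
  intro i j h
  simp only [Finset.mem_product, Finset.mem_range] at h ⊢
  exact ⟨h.1, h.2, fun i' j' _ _ h1 h2 => ⟨h1, h2⟩⟩

theorem box_bij (N : ℕ) : ∃ e : {f // IsPP (box N) f} ≃ Arr (box N),
    ∀ f : {f // IsPP (box N) f},
      ∑ x ∈ box N, f.1 x.1 x.2 = ∑ x ∈ box N, (x.1 + x.2 + 1) * (e f).1 x := by
  obtain ⟨e, he⟩ := main_bij N _ (box N) rfl (good_box N)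
  refine ⟨e, fun f => ?_⟩
  have hbox : ∀ i j, N ≤ i ∨ N ≤ j → f.1 i j = 0 := fun i j h =>
    f.2.1 i j (by simp only [Finset.mem_product, Finset.mem_range]; omega)
  rw [total_dsum N f.1 hbox, total_rsum]
  congr 1
  · refine Finset.sum_congr rfl fun j hj => he f 0 j ?_ ?_
    · have := Finset.mem_range.1 hj
      simp only [Finset.mem_product, Finset.mem_range]; omega
    · intro i' j' h; omega
  · refine Finset.sum_congr rfl fun i hi => ?_
    by_cases h : i + 1 < N
    · refine he f (i + 1) 0 ?_ ?_
      · simp only [Finset.mem_product, Finset.mem_range]; omega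
      · intro i' j' h h'; omega
    · rw [rsum_zero _ _ _ _ (by omega)]
      exact Finset.sum_eq_zero fun k _ => hbox _ _ (by omega)

/-- Plane partitions in the `N × N` box. -/
def inBox (N : ℕ) : Set PlanePartition := {π | ∀ i j, N ≤ i ∨ N ≤ j → π.part i j = 0}

/-- Plane partitions in the box as functions. -/
def boxEquiv (N : ℕ) : inBox N ≃ {f // IsPP (box N) f} where
  toFun π := ⟨π.1.part, fun i j h => π.2 i j (by
    simp only [Finset.mem_product, Finset.mem_range] at h; omega), fun i j _ =>
      ⟨π.1.antitone_fst j (Nat.le_succ i), π.1.antitone_snd i (Nat.le_succ j)⟩⟩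
  invFun f :=
    have hbox : ∀ i j, N ≤ i ∨ N ≤ j → f.1 i j = 0 := fun i j h =>
      f.2.1 i j (by simp only [Finset.mem_product, Finset.mem_range]; omega)
    have hm : ∀ i j, f.1 (i + 1) j ≤ f.1 i j ∧ f.1 i (j + 1) ≤ f.1 i j := fun i j => by
      by_cases h : (i, j) ∈ box N
      · exact f.2.2 i j h
      · simp only [Finset.mem_product, Finset.mem_range] at h
        rw [hbox (i + 1) j (by omega), hbox i (j + 1) (by omega)]; simp
    ⟨⟨f.1, fun i i' j h => antitone_nat_of_succ_le (f := fun i => f.1 i j) (fun i => (hm i j).1) h,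
      fun i j j' h => antitone_nat_of_succ_le (f := fun j => f.1 i j) (fun j => (hm i j).2) h,
      (box N).finite_toSet.subset fun x hx => by
        by_contra hc
        exact hx (f.2.1 x.1 x.2 hc)⟩, hbox⟩
  left_inv _ := rfl
  right_inv _ := rfl

lemma size_inBox (N : ℕ) (π : inBox N) : π.1.size = ∑ x ∈ box N, π.1.part x.1 x.2 := by
  refine tsum_eq_sum fun x hx => π.2 x.1 x.2 ?_
  simp only [Finset.mem_product, Finset.mem_range] at hx
  omega

lemma hasSum_box (q : ℝ) (h0 : 0 ≤ q) (h1 : q < 1) (N : ℕ) :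
    HasSum (fun π : inBox N => q ^ π.1.size) (∏ x ∈ box N, (1 - q ^ (x.1 + x.2 + 1))⁻¹) := by
  obtain ⟨e, he⟩ := box_bij N
  have h := arr_hasSum (fun x : ℕ × ℕ => q ^ (x.1 + x.2 + 1)) (fun x => pow_nonneg h0 _)
    (fun x => pow_lt_one₀ h0 h1 (by omega)) (box N)
  rw [← ((boxEquiv N).trans e).hasSum_iff] at h
  suffices heq : (fun π : inBox N => q ^ π.1.size) =
      (fun n : Arr (box N) => ∏ x ∈ box N, (q ^ (x.1 + x.2 + 1)) ^ n.1 x) ∘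
        ((boxEquiv N).trans e) by
    rw [heq]; exact h
  funext π
  simp only [Function.comp_apply, ← pow_mul]
  rw [Finset.prod_pow_eq_pow_sum, size_inBox]
  congr 1
  exact he (boxEquiv N π)

lemma inBox_mono {N M : ℕ} (h : N ≤ M) : inBox N ⊆ inBox M :=
  fun _ hπ i j hij => hπ i j (by omega)

lemma exists_inBox (π : PlanePartition) : ∃ N, π ∈ inBox N := by
  obtain ⟨N, hN⟩ := (π.finite_support.image fun x => x.1 + x.2).bddAbove
  refine ⟨N + 1, fun i j h => ?_⟩
  by_contra hc
  have : i + j ≤ N := hN ⟨(i, j), hc, rfl⟩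
  omega

lemma exists_inBox_finset (s : Finset PlanePartition) : ∃ N, ∀ π ∈ s, π ∈ inBox N := by
  choose F hF using exists_inBox
  exact ⟨s.sup F, fun π hπ => inBox_mono (Finset.le_sup hπ) (hF π)⟩

lemma tendsto_box : Tendsto box atTop atTop := by
  apply tendsto_atTop_finset_of_monotone
  · intro a b h
    exact Finset.product_subset_product (Finset.range_mono h) (Finset.range_mono h)
  · intro x
    refine ⟨x.1 + x.2 + 1, ?_⟩
    simp only [Finset.mem_product, Finset.mem_range]
    omega

lemma hasSum_all (q : ℝ) (h0 : 0 ≤ q) (h1 : q < 1) (A : ℝ)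
    (hA : HasProd (fun x : ℕ × ℕ => (1 - q ^ (x.1 + x.2 + 1))⁻¹) A) :
    HasSum (fun π : PlanePartition => q ^ π.size) A := by
  have hlim : Tendsto (fun N => ∏ x ∈ box N, (1 - q ^ (x.1 + x.2 + 1))⁻¹) atTop (𝓝 A) := by
    have hA' := hA
    rw [HasProd, SummationFilter.unconditional_filter] at hA'
    exact hA'.comp tendsto_box
  have hnn : ∀ π : PlanePartition, 0 ≤ q ^ π.size := fun π => pow_nonneg h0 _
  have hle : ∀ s : Finset PlanePartition, ∑ π ∈ s, q ^ π.size ≤ A := by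
    intro s
    obtain ⟨N, hN⟩ := exists_inBox_finset s
    refine ge_of_tendsto hlim (eventually_atTop.2 ⟨N, fun M hM => ?_⟩)
    rw [← Finset.sum_subtype_of_mem (p := (· ∈ inBox M)) (fun π : PlanePartition => q ^ π.size)
      (fun π hπ => inBox_mono hM (hN π hπ))]
    exact sum_le_hasSum _ (fun π _ => hnn _) (hasSum_box q h0 h1 M)
  have hsum : Summable (fun π : PlanePartition => q ^ π.size) := summable_of_sum_le hnn hle
  have heq : ∑' π : PlanePartition, q ^ π.size = A := by
    apply le_antisymm (hsum.tsum_le_of_sum_le hle)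
    refine le_of_tendsto' hlim fun N => ?_
    rw [← (hasSum_box q h0 h1 N).tsum_eq]
    exact hsum.tsum_subtype_le _ (inBox N) hnn
  rw [← heq]
  exact hsum.hasSum

lemma exists_hasProd (q : ℝ) (h0 : 0 ≤ q) (h1 : q < 1) : ∃ B : ℝ, B ≠ 0 ∧
    HasProd (fun x : ℕ × ℕ => 1 - q ^ (x.1 + x.2 + 1)) B := by
  have hg := summable_geometric_of_lt_one h0 h1
  have hs : Summable (fun x : ℕ × ℕ => - q ^ (x.1 + x.2 + 1)) := by
    have := ((hg.mul_of_nonneg hg (fun k => pow_nonneg h0 k)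
      (fun k => pow_nonneg h0 k)).mul_right q).neg
    refine this.congr fun x => ?_
    ring
  have hl := Real.summable_log_one_add_of_summable hs
  refine ⟨_, Real.exp_ne_zero (∑' x : ℕ × ℕ, Real.log (1 + - q ^ (x.1 + x.2 + 1))),
    Real.hasProd_of_hasSum_log (fun x => ?_) ?_⟩
  · have : q ^ (x.1 + x.2 + 1) < 1 := pow_lt_one₀ h0 h1 (by omega)
    linarith
  · simp only [sub_eq_add_neg]
    exact hl.hasSum

lemma hasProd_diag (q B : ℝ) (h : HasProd (fun x : ℕ × ℕ => 1 - q ^ (x.1 + x.2 + 1)) B) :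
    HasProd (fun n : ℕ => (1 - q ^ (n + 1)) ^ (n + 1)) B := by
  rw [← Equiv.hasProd_iff (Finset.HasAntidiagonal.sigmaAntidiagonalEquivProd (A := ℕ))] at h
  have h2 := h.sigma (fun n => hasProd_fintype _)
  suffices heq : (fun n : ℕ => (1 - q ^ (n + 1)) ^ (n + 1)) = fun n : ℕ =>
      ∏ c : Finset.HasAntidiagonal.antidiagonal n, ((fun x : ℕ × ℕ => 1 - q ^ (x.1 + x.2 + 1)) ∘
        Finset.HasAntidiagonal.sigmaAntidiagonalEquivProd) ⟨n, c⟩ by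
    rw [heq]; exact h2
  funext n
  rw [Finset.prod_congr rfl (g := fun _ => 1 - q ^ (n + 1))]
  · simp
  · rintro ⟨c, hc⟩ _
    have : c.1 + c.2 = n := Finset.HasAntidiagonal.mem_antidiagonal.1 hc
    simp [this]

lemma final (q : ℝ) (h0 : 0 ≤ q) (h1 : q < 1) :
    (∑' π : PlanePartition, q ^ π.size)
        = (∏' n : ℕ, ((1 - q ^ (n + 1)) ^ (n + 1))⁻¹) ∧
      (0 < q →
        HasSum
          (fun π : PlanePartition =>
            q ^ π.size * ∏' n : ℕ, (1 - q ^ (n + 1)) ^ (n + 1)) 1) := by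
  obtain ⟨B, hB, hP⟩ := exists_hasProd q h0 h1
  have hS := hasSum_all q h0 h1 _ (hP.inv₀ hB)
  have hd := hasProd_diag q B hP
  refine ⟨?_, fun _ => ?_⟩
  · rw [hS.tsum_eq, (hd.inv₀ hB).tprod_eq]
  · rw [hd.tprod_eq, ← inv_mul_cancel₀ hB]
    exact hS.mul_right B

end MacMahon

/-- **McMahon's identity.** For `0 ≤ q < 1`,
`Σ_π q^{|π|} = ∏_{n ≥ 1} (1 - qⁿ)^{-n}`; in particular, for `0 < q < 1` the
weights `q^{|π|} ∏_{n ≥ 1} (1 - qⁿ)ⁿ` sum to `1`, i.e. they define a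
probability measure on plane partitions. -/
theorem macmahon_identity (q : ℝ) (h0 : 0 ≤ q) (h1 : q < 1) :
    (∑' π : PlanePartition, q ^ π.size)
        = (∏' n : ℕ, ((1 - q ^ (n + 1)) ^ (n + 1))⁻¹) ∧
      (0 < q →
        HasSum
          (fun π : PlanePartition =>
            q ^ π.size * ∏' n : ℕ, (1 - q ^ (n + 1)) ^ (n + 1)) 1) := by
  exact MacMahon.final q h0 h1
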